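/- Let q be a prime power and n an odd positive integer with n | q²−1 and n > q+1. Let δ ∈ F_{q²}* \ F_q be an element of order n, and let C ⊆ F_q[x]/(x^n − 1) be the cyclic code with generator polynomial g(x) = (x−δ^{−q})(x−δ^{−1})(x−1)(x−δ)(x−δ^q). Suppose the minimum Hamming distance of C equals 4. Then C is an (n,7)_q MDS symbol-pair code if and only if for every integer i with 3 ≤ i ≤ n−3, the element (δ^{i+1} − 1)/(δ^i − δ) does not lie in F_q*. -/

import Mathlib

open Polynomial

/-- The pair-distance between two vectors indexed by `ZMod n`,
with indices taken modulo `n`. -/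
def pairDist {n : ℕ} [NeZero n] {α : Type*} [DecidableEq α] (u v : ZMod n → α) : ℕ :=
  (Finset.univ.filter fun i : ZMod n => (u i, u (i + 1)) ≠ (v i, v (i + 1))).card

/-- A finite subset of `ZMod n` consisting of (at least one) cyclically consecutive elements. -/
def IsArc {n : ℕ} (T : Finset (ZMod n)) : Prop :=
  ∃ (a : ZMod n) (k : ℕ), 0 < k ∧ T = (Finset.range k).image fun j : ℕ => a + (j : ZMod n)

/-- `L(S)`: the minimal number of parts in a partition of `S` into nonempty sets of
cyclically consecutive elements of `ZMod n`. -/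
noncomputable def cycL {n : ℕ} (S : Finset (ZMod n)) : ℕ :=
  sInf {m | ∃ P : Finset (Finset (ZMod n)), P.card = m ∧ (∀ T ∈ P, IsArc T) ∧
    (↑P : Set (Finset (ZMod n))).PairwiseDisjoint id ∧ P.sup id = S}

/-- The polynomial `∑ i, c i * x^i` associated to a vector `c` of length `n`. -/
noncomputable def polyOf {n : ℕ} [NeZero n] {F : Type*} [Semiring F] (c : ZMod n → F) :
    Polynomial F :=
  ∑ i : ZMod n, Polynomial.C (c i) * Polynomial.X ^ i.val

/-- `d` is the minimum pair-distance of the code `Code`. -/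
def IsMinPairDist {n : ℕ} [NeZero n] {α : Type*} [DecidableEq α]
    (Code : Set (ZMod n → α)) (d : ℕ) : Prop :=
  (∀ u ∈ Code, ∀ v ∈ Code, u ≠ v → d ≤ pairDist u v) ∧
    ∃ u ∈ Code, ∃ v ∈ Code, u ≠ v ∧ pairDist u v = d

/-- The coefficient `a₀(i) = ∑_{j=0}^{⌊(i−2)/2⌋} C(i−2−j, j) b^{i−2−2j} c^{j+1}`. -/
noncomputable def aCoeff0 {F : Type*} [Field F] (b c : F) (i : ℕ) : F :=
  ∑ j ∈ Finset.range ((i - 2) / 2 + 1),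
    ((i - 2 - j).choose j : F) * b ^ (i - 2 - 2 * j) * c ^ (j + 1)

/-- The coefficient `a₁(i) = ∑_{j=0}^{⌊(i−1)/2⌋} C(i−1−j, j) b^{i−1−2j} c^{j}`. -/
noncomputable def aCoeff1 {F : Type*} [Field F] (b c : F) (i : ℕ) : F :=
  ∑ j ∈ Finset.range ((i - 1) / 2 + 1),
    ((i - 1 - j).choose j : F) * b ^ (i - 1 - 2 * j) * c ^ j

set_option linter.unusedSectionVars false

/-- Evaluation of the polynomial of `c` at `x`. -/
noncomputable def evAt {n : ℕ} [NeZero n] {F E : Type*} [Field F] [Field E] [Algebra F E]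
    (x : E) : (ZMod n → F) →ₗ[F] E where
  toFun c := ∑ i : ZMod n, algebraMap F E (c i) * x ^ i.val
  map_add' c d := by simp [add_mul, Finset.sum_add_distrib]
  map_smul' r c := by simp [Finset.mul_sum, mul_assoc, Algebra.smul_def]

theorem evAt_def {n : ℕ} [NeZero n] {F E : Type*} [Field F] [Field E] [Algebra F E]
    (x : E) (c : ZMod n → F) : evAt x c = ∑ i : ZMod n, algebraMap F E (c i) * x ^ i.val := rfl

theorem evAt_eq {n : ℕ} [NeZero n] {F E : Type*} [Field F] [Field E] [Algebra F E]
    (x : E) (c : ZMod n → F) : evAt x c = aeval x (polyOf c) := by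
  simp [evAt_def, polyOf]

theorem polyOf_coeff {n : ℕ} [NeZero n] {F : Type*} [Field F] (c : ZMod n → F) (i : ZMod n) :
    (polyOf c).coeff i.val = c i := by
  simp only [polyOf, finsetSum_coeff, coeff_C_mul, coeff_X_pow]
  rw [Finset.sum_eq_single i]
  · simp
  · intro b _ hb
    rw [if_neg, mul_zero]
    intro h
    exact hb (ZMod.val_injective n h).symm
  · simp

theorem pow_val_add {n : ℕ} [NeZero n] {E : Type*} [Field E] {x : E} (hx : x ^ n = 1)
    (i j : ZMod n) : x ^ (i + j).val = x ^ i.val * x ^ j.val := by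
  rw [ZMod.val_add, ← pow_add]
  exact (pow_eq_pow_mod _ hx).symm

/-- Evaluation at an `n`-th root of unity of a shifted vector. -/
theorem evAt_shift {n : ℕ} [NeZero n] {F E : Type*} [Field F] [Field E] [Algebra F E]
    {x : E} (hx : x ^ n = 1) (c : ZMod n → F) (s : ZMod n) (h : evAt x c = 0) :
    evAt x (fun i => c (i + s)) = 0 := by
  have hx0 : x ≠ 0 := by
    rintro rfl
    rw [zero_pow (NeZero.ne n)] at hx
    exact zero_ne_one hx
  have key : evAt x (fun i => c (i + s)) * x ^ s.val = evAt x c := by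
    rw [evAt_def, evAt_def, Finset.sum_mul]
    rw [← Equiv.sum_comp (Equiv.addRight s) (fun i => algebraMap F E (c i) * x ^ i.val)]
    refine Finset.sum_congr rfl fun i _ => ?_
    simp only [Equiv.coe_addRight]
    rw [pow_val_add hx, mul_assoc]
  rw [h] at key
  exact (mul_eq_zero.mp key).resolve_right (pow_ne_zero _ hx0)

theorem coprime_lin {E : Type*} [Field E] {a b : E} (h : a ≠ b) :
    IsCoprime (X - C a) (X - C b) :=
  isCoprime_X_sub_C_of_isUnit_sub (sub_ne_zero_of_ne h).isUnit

section alg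
variable {q n : ℕ} [NeZero n] {F E : Type*} [Field F] [Fintype F]
    [Field E] [Fintype E] [Algebra F E]

theorem pow_ne_one_of {δ : E} (hδ : orderOf δ = n) {k : ℕ} (hk : 0 < k) (hkn : k < n) :
    δ ^ k ≠ 1 := fun h => by
  have := Nat.le_of_dvd hk (orderOf_dvd_of_pow_eq_one h)
  omega

theorem dvd_iff (hq : Fintype.card F = q)
    (hodd : Odd n) (hn : q + 1 < n)
    {δ : E} (hδ0 : δ ≠ 0) (hδ : orderOf δ = n) (c : ZMod n → F) :
    ((X - C (δ⁻¹ ^ q)) * (X - C δ⁻¹) * (X - 1) * (X - C δ) * (X - C (δ ^ q))) ∣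
        (polyOf c).map (algebraMap F E) ↔ evAt (1 : E) c = 0 ∧ evAt δ c = 0 ∧ evAt δ⁻¹ c = 0 := by
  have hq2 : 2 ≤ q := hq ▸ Fintype.one_lt_card
  have hroot : ∀ x : E, (X - C x) ∣ (polyOf c).map (algebraMap F E) ↔ evAt x c = 0 := by
    intro x
    rw [dvd_iff_isRoot, IsRoot.def, eval_map_algebraMap, evAt_eq]
  have hfrob : ∀ x : E, evAt x c = 0 → evAt (x ^ q) c = 0 := by
    intro x hx
    have := aeval_algHom_apply (FiniteField.frobeniusAlgHom F E) x (polyOf c)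
    rw [← evAt_eq, ← evAt_eq, hx, map_zero] at this
    rw [← hq]
    exact this
  have e1 : δ ^ (q + 1) ≠ 1 := pow_ne_one_of hδ (by omega) (by omega)
  have e2 : δ ^ (q - 1) ≠ 1 := pow_ne_one_of hδ (by omega) (by omega)
  have e3 : δ ^ 2 ≠ 1 := pow_ne_one_of hδ (by omega) (by omega)
  have e4 : δ ^ q ≠ 1 := pow_ne_one_of hδ (by omega) (by omega)
  have e5 : δ ^ (2 * q) ≠ 1 := fun h => by
    have h1 := orderOf_dvd_of_pow_eq_one h
    rw [hδ] at h1
    have h2 := (Nat.Coprime.dvd_of_dvd_mul_left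
      (Nat.coprime_two_right.mpr hodd) h1)
    have := Nat.le_of_dvd (by omega) h2
    omega
  have e6 : δ ≠ 1 := by simpa using pow_ne_one_of hδ (k := 1) (by omega) (by omega)
  have hqs : δ ^ q = δ ^ (q - 1) * δ := by rw [← pow_succ]; congr 1; omega
  have hpq : δ ^ q ≠ 0 := pow_ne_zero _ hδ0
  have n12 : δ⁻¹ ^ q ≠ δ⁻¹ := by
    rw [inv_pow]; intro h; rw [inv_inj, hqs] at h
    exact e2 (mul_right_cancel₀ hδ0 (h.trans (one_mul δ).symm))
  have n13 : δ⁻¹ ^ q ≠ 1 := by rw [inv_pow]; simpa using e4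
  have n14 : δ⁻¹ ^ q ≠ δ := by
    rw [inv_pow]; intro h; apply e1; rw [pow_succ]; nth_rewrite 2 [← h]; field_simp
  have n15 : δ⁻¹ ^ q ≠ δ ^ q := by
    rw [inv_pow]; intro h; apply e5; rw [two_mul, pow_add]; nth_rewrite 2 [← h]; field_simp
  have n23 : δ⁻¹ ≠ 1 := by simpa using e6
  have n24 : δ⁻¹ ≠ δ := by
    intro h; apply e3; rw [pow_two]; nth_rewrite 2 [← h]; field_simp
  have n25 : δ⁻¹ ≠ δ ^ q := by
    intro h; apply e1; rw [pow_succ, ← h]; field_simp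
  have n35 : (1 : E) ≠ δ ^ q := e4.symm
  have n45 : δ ≠ δ ^ q := by
    intro h; rw [hqs] at h
    exact e2 (mul_right_cancel₀ hδ0 (h.symm.trans (one_mul δ).symm))
  have hone : (X - 1 : E[X]) = X - C 1 := by simp
  rw [hone]
  constructor
  · intro h
    refine ⟨(hroot 1).1 (dvd_trans ?_ h), (hroot δ).1 (dvd_trans ?_ h),
      (hroot δ⁻¹).1 (dvd_trans ?_ h)⟩
    · exact ((dvd_mul_left _ _).mul_right _).mul_right _
    · exact (dvd_mul_left _ _).mul_right _
    · exact (((dvd_mul_left _ _).mul_right _).mul_right _).mul_right _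
  · rintro ⟨h1, h2, h3⟩
    have d1 := (hroot _).2 (hfrob _ h3)
    have d2 := (hroot _).2 h3
    have d3 := (hroot _).2 h1
    have d4 := (hroot _).2 h2
    have d5 := (hroot _).2 (hfrob _ h2)
    refine IsCoprime.mul_dvd ?_ (IsCoprime.mul_dvd ?_ (IsCoprime.mul_dvd ?_
      (IsCoprime.mul_dvd ?_ d1 d2) d3) d4) d5
    · exact (((coprime_lin n15).mul_left (coprime_lin n25)).mul_left (coprime_lin n35)).mul_left
        (coprime_lin n45)
    · exact ((coprime_lin n14).mul_left (coprime_lin n24)).mul_left (coprime_lin e6.symm)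
    · exact (coprime_lin n13).mul_left (coprime_lin n23)
    · exact coprime_lin n12

/-- A codeword supported on the first five positions vanishes. -/
theorem eq_zero_of_five (hq : Fintype.card F = q)
    (hodd : Odd n) (hn : q + 1 < n)
    {δ : E} (hδ0 : δ ≠ 0) (hδ : orderOf δ = n) (c : ZMod n → F)
    (hc : evAt (1 : E) c = 0 ∧ evAt δ c = 0 ∧ evAt δ⁻¹ c = 0)
    (h5 : ∀ i : ZMod n, c i ≠ 0 → i.val < 5) : c = 0 := by
  have h := (dvd_iff hq hodd hn hδ0 hδ c).2 hc
  have hone : (X - 1 : E[X]) = X - C 1 := by simp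
  have hz : (polyOf c).map (algebraMap F E) = 0 := by
    refine eq_zero_of_dvd_of_degree_lt h ?_
    have hdeg : ((X - C (δ⁻¹ ^ q)) * (X - C δ⁻¹) * (X - 1) * (X - C δ) * (X - C (δ ^ q))).degree
        = 5 := by
      rw [hone]
      simp only [degree_mul, degree_X_sub_C]
      norm_num
    rw [hdeg, degree_map]
    refine lt_of_le_of_lt (degree_sum_le _ _) ?_
    rw [Finset.sup_lt_iff (by exact WithBot.bot_lt_coe 5)]
    intro i _
    by_cases hi : c i = 0
    · rw [hi, C_0, zero_mul, degree_zero]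
      exact WithBot.bot_lt_coe 5
    · refine lt_of_le_of_lt (degree_C_mul_X_pow_le _ _) ?_
      exact_mod_cast h5 i hi
  rw [Polynomial.map_eq_zero] at hz
  funext i
  rw [← polyOf_coeff c i, hz]
  simp

/-- The three evaluations together. -/
noncomputable def evMap (n : ℕ) [NeZero n] (F : Type*) {E : Type*} [Field F]
    [Field E] [Algebra F E] (δ : E) : (ZMod n → F) →ₗ[F] (F × E × E) :=
  (∑ i : ZMod n, LinearMap.proj i : (ZMod n → F) →ₗ[F] F).prod ((evAt δ).prod (evAt δ⁻¹))

theorem mem_ker_evMap {δ : E} (c : ZMod n → F) : c ∈ LinearMap.ker (evMap n F δ) ↔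
    evAt (1 : E) c = 0 ∧ evAt δ c = 0 ∧ evAt δ⁻¹ c = 0 := by
  have : evAt (1 : E) c = algebraMap F E (∑ i, c i) := by simp [evAt_def]
  rw [this, map_eq_zero]
  simp [evMap, LinearMap.mem_ker]

/-- Extension by zero of a vector of length `k`. -/
def extZ (n : ℕ) [NeZero n] (F : Type*) [Field F] (k : ℕ) : (Fin k → F) →ₗ[F] (ZMod n → F) where
  toFun v i := if h : i.val < k then v ⟨i.val, h⟩ else 0
  map_add' v w := by funext i; by_cases h : i.val < k <;> simp [h]
  map_smul' r v := by funext i; by_cases h : i.val < k <;> simp [h]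

theorem extZ_val {k : ℕ} (v : Fin k → F) (i : ZMod n) (h : extZ n F k v i ≠ 0) : i.val < k := by
  by_contra h'
  exact h (by simp [extZ, h'])

theorem extZ_inj {k : ℕ} (hk : k ≤ n) (v : Fin k → F) (h : extZ n F k v = 0) : v = 0 := by
  funext j
  have hj := congrFun h (j.val : ZMod n)
  have hv : ((j.val : ℕ) : ZMod n).val = j.val := ZMod.val_natCast_of_lt (by omega)
  simpa [extZ, hv] using hj

theorem finrank_target (hq : Fintype.card F = q) (hE : Fintype.card E = q ^ 2) :
    Module.finrank F (F × E × E) = 5 := by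
  have hq2 : 2 ≤ q := hq ▸ Fintype.one_lt_card
  have h2 : Module.finrank F E = 2 := by
    have := Module.card_eq_pow_finrank (K := F) (V := E)
    rw [hE, hq] at this
    exact (Nat.pow_right_injective hq2 this).symm
  simp [Module.finrank_prod, h2]

theorem card_ker (hq : Fintype.card F = q) (hE : Fintype.card E = q ^ 2)
    (hodd : Odd n) (hn : q + 1 < n) (h5 : 5 ≤ n)
    {δ : E} (hδ0 : δ ≠ 0) (hδ : orderOf δ = n) :
    Nat.card (LinearMap.ker (evMap n F δ)) = q ^ (n - 5) := by
  have hsurj : Function.Surjective ((evMap n F δ) ∘ₗ (extZ n F 5)) := by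
    rw [← LinearMap.injective_iff_surjective_of_finrank_eq_finrank]
    · rw [← LinearMap.ker_eq_bot, LinearMap.ker_eq_bot']
      intro v hv
      have h1 : extZ n F 5 v ∈ LinearMap.ker (evMap n F δ) := hv
      rw [mem_ker_evMap] at h1
      exact extZ_inj h5 v (eq_zero_of_five hq hodd hn hδ0 hδ _ h1 (extZ_val v))
    · rw [finrank_target hq hE]; simp
  have hs : Function.Surjective (evMap n F δ) := fun y => by
    obtain ⟨v, hv⟩ := hsurj y
    exact ⟨_, hv⟩
  have hr := LinearMap.finrank_range_add_finrank_ker (evMap n F δ)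
  rw [LinearMap.range_eq_top.2 hs, finrank_top, finrank_target hq hE] at hr
  rw [Module.natCard_eq_pow_finrank (K := F), Nat.card_eq_fintype_card, hq]
  congr 1
  simp only [Module.finrank_fintype_fun_eq_card, ZMod.card] at hr
  omega

theorem exists_six (hq : Fintype.card F = q) (hE : Fintype.card E = q ^ 2) (h6 : 6 ≤ n) (δ : E) :
    ∃ c : ZMod n → F, c ≠ 0 ∧ c ∈ LinearMap.ker (evMap n F δ) ∧ ∀ i, c i ≠ 0 → i.val < 6 := by
  have hk : LinearMap.ker ((evMap n F δ) ∘ₗ (extZ n F 6)) ≠ ⊥ := by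
    apply LinearMap.ker_ne_bot_of_finrank_lt
    rw [finrank_target hq hE]; simp
  obtain ⟨v, hv, hv0⟩ := Submodule.exists_mem_ne_zero_of_ne_bot hk
  exact ⟨extZ n F 6 v, fun h => hv0 (extZ_inj h6 v h), hv, extZ_val v⟩

end alg

section ratio
variable {q n : ℕ} [NeZero n] {F E : Type*} [Field F] [Field E] [Algebra F E]

theorem evAt_of_supp (x : E) (c : ZMod n → F) (T : Finset ℕ) (hT : ∀ k ∈ T, k < n)
    (hc : ∀ j, c j ≠ 0 → j.val ∈ T) :
    evAt x c = ∑ k ∈ T, algebraMap F E (c (k : ZMod n)) * x ^ k := by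
  classical
  rw [evAt_def]
  have hinj : Set.InjOn (fun k : ℕ => (k : ZMod n)) (T : Set ℕ) := by
    intro a ha b hb hab
    have := congrArg ZMod.val hab
    simpa only [ZMod.val_natCast_of_lt (hT a ha), ZMod.val_natCast_of_lt (hT b hb)] using this
  have h1 : ∑ k ∈ T, algebraMap F E (c (k : ZMod n)) * x ^ k =
      ∑ j ∈ T.image (fun k : ℕ => (k : ZMod n)), algebraMap F E (c j) * x ^ j.val := by
    rw [Finset.sum_image hinj]
    refine Finset.sum_congr rfl fun k hk => ?_
    rw [ZMod.val_natCast_of_lt (hT k hk)]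
  rw [h1]
  symm
  refine Finset.sum_subset (Finset.subset_univ _) fun j _ hj => ?_
  have : c j = 0 := by
    by_contra h
    exact hj (Finset.mem_image.2 ⟨j.val, hc j h, ZMod.natCast_zmod_val j⟩)
  simp [this]

theorem eq_zero_of_supp (c : ZMod n → F) (T : Finset ℕ)
    (hc : ∀ j, c j ≠ 0 → j.val ∈ T) (h0 : ∀ k ∈ T, c (k : ZMod n) = 0) : c = 0 := by
  funext j
  by_contra h
  have := h0 _ (hc j h)
  rw [ZMod.natCast_zmod_val] at this
  exact h this

theorem pow_sub_ne {δ : E} (hδ0 : δ ≠ 0) (hδ : orderOf δ = n) {i : ℕ} (hi : 3 ≤ i)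
    (hin : i ≤ n - 3) : δ ^ i - δ ≠ 0 ∧ δ ^ i * δ - 1 ≠ 0 ∧ δ ^ i - 1 ≠ 0 ∧ δ - 1 ≠ 0 := by
  have hp : ∀ {k : ℕ}, 0 < k → k < n → δ ^ k ≠ 1 := fun hk hkn h => by
    have := Nat.le_of_dvd hk (orderOf_dvd_of_pow_eq_one h)
    omega
  refine ⟨?_, ?_, ?_, ?_⟩
  · intro h
    apply hp (k := i - 1) (by omega) (by omega)
    have h2 : δ ^ i = δ ^ (i - 1) * δ := by rw [← pow_succ]; congr 1; omega
    rw [h2] at h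
    exact mul_right_cancel₀ hδ0 ((sub_eq_zero.1 h).trans (one_mul δ).symm)
  · rw [← pow_succ]
    exact sub_ne_zero.2 (hp (by omega) (by omega))
  · exact sub_ne_zero.2 (hp (by omega) (by omega))
  · simpa using sub_ne_zero.2 (hp (k := 1) (by omega) (by omega))

theorem ratio22 {δ : E} (hδ0 : δ ≠ 0) (hδ : orderOf δ = n) {i : ℕ} (hi : 3 ≤ i)
    (hin : i ≤ n - 3) (c : ZMod n → F) (hc0 : c ≠ 0)
    (hc : evAt (1 : E) c = 0 ∧ evAt δ c = 0 ∧ evAt δ⁻¹ c = 0)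
    (hs : ∀ j, c j ≠ 0 → j.val ∈ ({0, 1, i, i + 1} : Finset ℕ)) :
    ∃ τ : F, τ ≠ 0 ∧ algebraMap F E τ = (δ ^ (i + 1) - 1) / (δ ^ i - δ) := by
  obtain ⟨n1, n2, n3, n4⟩ := pow_sub_ne hδ0 hδ hi hin
  have hT : ∀ k ∈ ({0, 1, i, i + 1} : Finset ℕ), k < n := by
    intro k hk
    simp only [Finset.mem_insert, Finset.mem_singleton] at hk
    omega
  have hsum : ∀ f : ℕ → E, ∑ k ∈ ({0, 1, i, i + 1} : Finset ℕ), f k =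
      f 0 + (f 1 + (f i + f (i + 1))) := by
    intro f
    rw [Finset.sum_insert, Finset.sum_insert, Finset.sum_insert, Finset.sum_singleton]
    all_goals
      simp only [Finset.mem_insert, Finset.mem_singleton]
      omega
  have hz := eq_zero_of_supp c _ hs
  obtain ⟨h1, h2, h3⟩ := hc
  rw [evAt_of_supp _ c _ hT hs, hsum] at h1 h2 h3
  set a0 := c ((0 : ℕ) : ZMod n) with ha0
  set b0 := c ((1 : ℕ) : ZMod n) with hb0
  set d0 := c ((i : ℕ) : ZMod n) with hd0
  set e0 := c ((i + 1 : ℕ) : ZMod n) with he0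
  set a := algebraMap F E a0 with ha
  set b := algebraMap F E b0 with hb
  set d := algebraMap F E d0 with hd
  set e := algebraMap F E e0 with he
  rw [pow_succ δ i] at h2 ⊢
  rw [pow_succ δ⁻¹ i, inv_pow δ i] at h3
  simp only [one_pow, mul_one, pow_zero, pow_one] at h1 h2 h3
  have hD0 : δ ^ i ≠ 0 := pow_ne_zero _ hδ0
  generalize δ ^ i = D at *
  have h3' : a * D * δ + b * D + d * δ + e = 0 := by
    have : (a + (b * δ⁻¹ + (d * D⁻¹ + e * (D⁻¹ * δ⁻¹)))) * (D * δ) = 0 := by rw [h3, zero_mul]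
    field_simp at this
    linear_combination this
  have h4 : a + e = 0 := by
    have : (a + e) * ((δ - 1) * (D - 1)) = 0 := by
      linear_combination h2 + h3' - (δ + D) * h1
    exact (mul_eq_zero.1 this).resolve_right (mul_ne_zero n4 n3)
  have h5 : b + d = 0 := by linear_combination h1 - h4
  have h6 : a * (D * δ - 1) = - b * (D - δ) := by
    linear_combination -h2 + D * δ * h4 + D * h5
  have hzero : a = 0 → False := by
    intro h
    have hb' : b = 0 := by
      rw [h, zero_mul] at h6
      have := (mul_eq_zero.1 h6.symm).resolve_right n1
      simpa using this
    have hd' : d = 0 := by rw [hb'] at h5; simpa using h5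
    have he' : e = 0 := by rw [h] at h4; simpa using h4
    apply hc0
    apply hz
    intro k hk
    simp only [Finset.mem_insert, Finset.mem_singleton] at hk
    rcases hk with rfl | rfl | rfl | rfl
    · exact (map_eq_zero (algebraMap F E)).1 h
    · exact (map_eq_zero (algebraMap F E)).1 hb'
    · exact (map_eq_zero (algebraMap F E)).1 hd'
    · exact (map_eq_zero (algebraMap F E)).1 he'
  have hb' : b ≠ 0 := by
    intro h
    rw [h, neg_zero, zero_mul] at h6
    exact hzero ((mul_eq_zero.1 h6).resolve_right n2)
  refine ⟨- b0 / a0, ?_, ?_⟩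
  · refine div_ne_zero (neg_ne_zero.2 fun h => hb' ?_) fun h => hzero ?_
    · rw [hb, h, map_zero]
    · rw [ha, h, map_zero]
  · rw [map_div₀, map_neg, ← ha, ← hb, div_eq_div_iff hzero n1]
    linear_combination - h6

theorem ratio31 {δ : E} (hδ0 : δ ≠ 0) (hδ : orderOf δ = n) {i : ℕ} (hi : 3 ≤ i)
    (hin : i ≤ n - 3) (c : ZMod n → F) (hc0 : c ≠ 0)
    (hc : evAt (1 : E) c = 0 ∧ evAt δ c = 0 ∧ evAt δ⁻¹ c = 0)
    (hs : ∀ j, c j ≠ 0 → j.val ∈ ({0, 1, 2, i + 1} : Finset ℕ)) :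
    ∃ τ : F, τ ≠ 0 ∧ algebraMap F E τ = (δ ^ (i + 1) - 1) / (δ ^ i - δ) := by
  obtain ⟨n1, n2, n3, n4⟩ := pow_sub_ne hδ0 hδ hi hin
  have hT : ∀ k ∈ ({0, 1, 2, i + 1} : Finset ℕ), k < n := by
    intro k hk
    simp only [Finset.mem_insert, Finset.mem_singleton] at hk
    omega
  have hsum : ∀ f : ℕ → E, ∑ k ∈ ({0, 1, 2, i + 1} : Finset ℕ), f k =
      f 0 + (f 1 + (f 2 + f (i + 1))) := by
    intro f
    rw [Finset.sum_insert, Finset.sum_insert, Finset.sum_insert, Finset.sum_singleton]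
    all_goals
      simp only [Finset.mem_insert, Finset.mem_singleton]
      omega
  have hz := eq_zero_of_supp c _ hs
  obtain ⟨h1, h2, h3⟩ := hc
  rw [evAt_of_supp _ c _ hT hs, hsum] at h1 h2 h3
  set a0 := c ((0 : ℕ) : ZMod n) with ha0
  set b0 := c ((1 : ℕ) : ZMod n) with hb0
  set d0 := c ((2 : ℕ) : ZMod n) with hd0
  set e0 := c ((i + 1 : ℕ) : ZMod n) with he0
  set a := algebraMap F E a0 with ha
  set b := algebraMap F E b0 with hb
  set d := algebraMap F E d0 with hd
  set e := algebraMap F E e0 with he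
  rw [pow_succ δ i] at h2 ⊢
  rw [pow_succ δ⁻¹ i, inv_pow δ i] at h3
  simp only [one_pow, mul_one, pow_zero, pow_one] at h1 h2 h3
  have hD0 : δ ^ i ≠ 0 := pow_ne_zero _ hδ0
  generalize δ ^ i = D at *
  have h3' : a * D * δ ^ 2 + b * D * δ + d * D + e * δ = 0 := by
    have : (a + (b * δ⁻¹ + (d * (δ ^ 2)⁻¹ + e * (D⁻¹ * δ⁻¹)))) * (D * δ ^ 2) = 0 := by
      rw [inv_pow] at h3; rw [h3, zero_mul]
    field_simp at this
    linear_combination this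
  have h6 : a * (D * δ - 1) = d * (D - δ) := by
    have : (δ - 1) * (a * (D * δ - 1) - d * (D - δ)) = 0 := by
      linear_combination h2 + h3' - (δ + D * δ) * h1
    exact sub_eq_zero.1 ((mul_eq_zero.1 this).resolve_left n4)
  have hzero : a = 0 → False := by
    intro h
    have hd' : d = 0 := by
      rw [h, zero_mul] at h6
      exact (mul_eq_zero.1 h6.symm).resolve_right n1
    have he' : e = 0 := by
      have : e * (δ * (D - 1)) = 0 := by
        rw [h, hd'] at h1 h2
        linear_combination h2 - δ * h1
      exact (mul_eq_zero.1 this).resolve_right (mul_ne_zero hδ0 n3)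
    have hb' : b = 0 := by rw [h, hd', he'] at h1; simpa using h1
    apply hc0
    apply hz
    intro k hk
    simp only [Finset.mem_insert, Finset.mem_singleton] at hk
    rcases hk with rfl | rfl | rfl | rfl
    · exact (map_eq_zero (algebraMap F E)).1 h
    · exact (map_eq_zero (algebraMap F E)).1 hb'
    · exact (map_eq_zero (algebraMap F E)).1 hd'
    · exact (map_eq_zero (algebraMap F E)).1 he'
  have hd' : d ≠ 0 := by
    intro h
    rw [h, zero_mul] at h6
    exact hzero ((mul_eq_zero.1 h6).resolve_right n2)
  refine ⟨d0 / a0, ?_, ?_⟩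
  · refine div_ne_zero (fun h => hd' ?_) fun h => hzero ?_
    · rw [hd, h, map_zero]
    · rw [ha, h, map_zero]
  · rw [map_div₀, ← ha, ← hd, div_eq_div_iff hzero n1]
    linear_combination - h6

end ratio

section comb
variable {n : ℕ} [NeZero n]

/-- The left end points of the runs of `S`. -/
def startsOf (S : Finset (ZMod n)) : Finset (ZMod n) := S.filter fun b => b - 1 ∉ S

theorem exists_start (S : Finset (ZMod n)) {t : ZMod n} (ht : t ∉ S) {s : ZMod n} (hs : s ∈ S) :
    ∃ b ∈ startsOf S, ∃ k : ℕ, k < n ∧ s = b + k ∧ ∀ j ≤ k, b + (j : ZMod n) ∈ S := by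
  classical
  have hex : ∃ m : ℕ, s - (m : ZMod n) ∉ S := ⟨(s - t).val, by simpa using ht⟩
  have hlt : Nat.find hex ≤ (s - t).val := Nat.find_min' hex (by simpa using ht)
  have hlt2 := ZMod.val_lt (s - t)
  have hspec := Nat.find_spec hex
  have hmin : ∀ m < Nat.find hex, s - (m : ZMod n) ∈ S := fun m hm => by
    simpa using Nat.find_min hex hm
  generalize Nat.find hex = M at *
  have hM : M ≠ 0 := by
    rintro rfl
    simp at hspec
    exact hspec hs
  obtain ⟨k, rfl⟩ := Nat.exists_eq_succ_of_ne_zero hM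
  refine ⟨s - k, ?_, k, by omega, by simp, ?_⟩
  · rw [startsOf, Finset.mem_filter]
    refine ⟨hmin k (by omega), ?_⟩
    convert hspec using 1
    push_cast
    ring
  · intro j hj
    have := hmin (k - j) (by omega)
    rw [Nat.cast_sub hj] at this
    convert this using 1
    ring

theorem run_card (S : Finset (ZMod n)) {b : ZMod n} {k : ℕ} (hk : k < n)
    (h : ∀ j ≤ k, b + (j : ZMod n) ∈ S) : k + 1 ≤ S.card := by
  classical
  rw [← Finset.card_range (k + 1)]
  refine Finset.card_le_card_of_injOn (fun j : ℕ => b + (j : ZMod n)) ?_ ?_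
  · intro j hj
    exact h j (by simpa [Nat.lt_succ_iff] using hj)
  · intro x hx y hy hxy
    have hx' : x < k + 1 := by simpa using hx
    have hy' : y < k + 1 := by simpa using hy
    have := congrArg ZMod.val (add_left_cancel hxy)
    rwa [ZMod.val_natCast_of_lt (by omega), ZMod.val_natCast_of_lt (by omega)] at this

theorem card_add_starts (S : Finset (ZMod n)) :
    S.card + (startsOf S).card ≤ (Finset.univ.filter fun i : ZMod n => i ∈ S ∨ i + 1 ∈ S).card := by
  classical
  have h : (startsOf S).card = ((startsOf S).image fun b => b - 1).card :=
    (Finset.card_image_of_injective _ (sub_left_injective)).symm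
  rw [h, ← Finset.card_union_of_disjoint]
  · apply Finset.card_le_card
    intro i hi
    simp only [Finset.mem_union, Finset.mem_image, startsOf, Finset.mem_filter] at hi
    simp only [Finset.mem_filter, Finset.mem_univ, true_and]
    rcases hi with hi | ⟨b, ⟨hb, _⟩, rfl⟩
    · exact Or.inl hi
    · right; simpa using hb
  · rw [Finset.disjoint_left]
    intro i hi hi'
    simp only [Finset.mem_image, startsOf, Finset.mem_filter] at hi'
    obtain ⟨b, ⟨_, hb⟩, rfl⟩ := hi'
    exact hb hi

theorem comb31 (hn : 7 ≤ n) (S : Finset (ZMod n)) (h4 : S.card = 4) {t : ZMod n} (ht : t ∉ S)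
    {b₁ b₂ : ZMod n} (hne : b₁ ≠ b₂) (hB : startsOf S = {b₁, b₂}) (h2 : b₂ + 1 ∉ S) :
    ∃ i : ℕ, 3 ≤ i ∧ i ≤ n - 3 ∧ ∀ j : ZMod n, j + b₁ ∈ S →
      j.val ∈ ({0, 1, 2, i + 1} : Finset ℕ) := by
  classical
  have hb1 : b₁ ∈ startsOf S := by simp [hB]
  have hb2 : b₂ ∈ startsOf S := by simp [hB]
  rw [startsOf, Finset.mem_filter] at hb1 hb2
  have hstr : ∀ s ∈ S, s = b₂ ∨ ∃ k : ℕ, s = b₁ + k ∧ ∀ j ≤ k, b₁ + (j : ZMod n) ∈ S := by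
    intro s hs
    obtain ⟨b, hb, k, hk, rfl, hj⟩ := exists_start S ht hs
    rw [hB, Finset.mem_insert, Finset.mem_singleton] at hb
    rcases hb with rfl | rfl
    · exact Or.inr ⟨k, rfl, hj⟩
    · left
      rcases Nat.eq_zero_or_pos k with rfl | hk
      · simp
      · exact absurd (by simpa using hj 1 hk) h2
  have h1 : b₁ + 1 ∈ S := by
    by_contra hcon
    have : S ⊆ {b₁, b₂} := by
      intro s hs
      rcases hstr s hs with rfl | ⟨k, rfl, hj⟩
      · simp
      · rcases Nat.eq_zero_or_pos k with rfl | hk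
        · simp
        · exact absurd (by simpa using hj 1 hk) hcon
    have := (Finset.card_le_card this).trans Finset.card_le_two
    omega
  have h12 : b₁ + 2 ∈ S := by
    by_contra hcon
    have : S ⊆ {b₁, b₁ + 1, b₂} := by
      intro s hs
      rcases hstr s hs with rfl | ⟨k, rfl, hj⟩
      · simp
      · rcases Nat.lt_or_ge k 2 with hk | hk
        · interval_cases k <;> simp
        · exact absurd (by simpa using hj 2 hk) hcon
    have := (Finset.card_le_card this).trans Finset.card_le_three
    omega
  obtain ⟨r, hr, rfl⟩ : ∃ r : ℕ, r < n ∧ b₂ = b₁ + r :=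
    ⟨(b₂ - b₁).val, ZMod.val_lt _, by simp⟩
  have hr0 : r ≠ 0 := by rintro rfl; simp at hne
  have hr1 : r ≠ 1 := by rintro rfl; simp [hb1.1] at hb2
  have hr2 : r ≠ 2 := by
    rintro rfl
    apply hb2.2; convert h1 using 1; push_cast; ring
  have hr3 : r ≠ 3 := by
    rintro rfl
    apply hb2.2; convert h12 using 1; push_cast; ring
  have hrn : r ≠ n - 1 := by
    rintro rfl
    apply h2; convert hb1.1 using 1; rw [Nat.cast_sub (by omega)]; simp
  have hv1 : ((1 : ℕ) : ZMod n).val = 1 := ZMod.val_natCast_of_lt (by omega)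
  have hv2 : ((2 : ℕ) : ZMod n).val = 2 := ZMod.val_natCast_of_lt (by omega)
  have hvr : ((r : ℕ) : ZMod n).val = r := ZMod.val_natCast_of_lt (by omega)
  set T : Finset (ZMod n) := ({0, 1, 2, r} : Finset ℕ).image (fun k : ℕ => b₁ + (k : ZMod n)) with hT
  have hTS : T = S := by
    apply Finset.eq_of_subset_of_card_le
    · intro s hs
      simp only [hT, Finset.mem_image, Finset.mem_insert, Finset.mem_singleton] at hs
      obtain ⟨k, rfl | rfl | rfl | rfl, rfl⟩ := hs
      · simpa using hb1.1
      · simpa using h1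
      · simpa using h12
      · exact hb2.1
    · rw [h4, hT, Finset.card_image_of_injOn]
      · rw [Finset.card_insert_of_notMem, Finset.card_insert_of_notMem,
          Finset.card_insert_of_notMem, Finset.card_singleton]
        all_goals
          simp only [Finset.mem_insert, Finset.mem_singleton]
          omega
      · intro x hx y hy hxy
        have hx' : x < n := by
          simp only [Finset.coe_insert, Finset.coe_singleton, Set.mem_insert_iff,
            Set.mem_singleton_iff] at hx; omega
        have hy' : y < n := by
          simp only [Finset.coe_insert, Finset.coe_singleton, Set.mem_insert_iff,
            Set.mem_singleton_iff] at hy; omega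
        have := congrArg ZMod.val (add_left_cancel hxy)
        rwa [ZMod.val_natCast_of_lt (by omega), ZMod.val_natCast_of_lt (by omega)] at this
  refine ⟨r - 1, by omega, by omega, ?_⟩
  intro j hj
  rw [← hTS, hT, Finset.mem_image] at hj
  obtain ⟨k, hk, hkj⟩ := hj
  rw [add_comm j, add_right_inj] at hkj
  subst hkj
  simp only [Finset.mem_insert, Finset.mem_singleton] at hk ⊢
  rcases hk with rfl | rfl | rfl | rfl
  · simp
  · rw [hv1]; simp
  · rw [hv2]; simp
  · rw [hvr]; omega

theorem comb22 (hn : 7 ≤ n) (S : Finset (ZMod n)) (h4 : S.card = 4)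
    {b₁ b₂ : ZMod n} (hne : b₁ ≠ b₂) (hB : startsOf S = {b₁, b₂}) (h1 : b₁ + 1 ∈ S)
    (h2 : b₂ + 1 ∈ S) :
    ∃ i : ℕ, 3 ≤ i ∧ i ≤ n - 3 ∧ ∀ j : ZMod n, j + b₁ ∈ S →
      j.val ∈ ({0, 1, i, i + 1} : Finset ℕ) := by
  classical
  have hb1 : b₁ ∈ startsOf S := by simp [hB]
  have hb2 : b₂ ∈ startsOf S := by simp [hB]
  rw [startsOf, Finset.mem_filter] at hb1 hb2
  obtain ⟨r, hr, rfl⟩ : ∃ r : ℕ, r < n ∧ b₂ = b₁ + r :=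
    ⟨(b₂ - b₁).val, ZMod.val_lt _, by simp⟩
  have hr0 : r ≠ 0 := by rintro rfl; simp at hne
  have hr1 : r ≠ 1 := by rintro rfl; simp [hb1.1] at hb2
  have hr2 : r ≠ 2 := by
    rintro rfl
    apply hb2.2; convert h1 using 1; push_cast; ring
  have hrn : r ≠ n - 1 := by
    rintro rfl
    apply hb1.2; convert hb2.1 using 1; rw [Nat.cast_sub (by omega)]; simp; ring_nf
  have hrn2 : r ≠ n - 2 := by
    rintro rfl
    apply hb1.2; convert h2 using 1; rw [Nat.cast_sub (by omega)]; simp; ring_nf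
  have hv1 : ((1 : ℕ) : ZMod n).val = 1 := ZMod.val_natCast_of_lt (by omega)
  have hvr1 : ((r + 1 : ℕ) : ZMod n).val = r + 1 := ZMod.val_natCast_of_lt (by omega)
  have hvr : ((r : ℕ) : ZMod n).val = r := ZMod.val_natCast_of_lt (by omega)
  set T : Finset (ZMod n) :=
    ({0, 1, r, r + 1} : Finset ℕ).image (fun k : ℕ => b₁ + (k : ZMod n)) with hT
  have hTS : T = S := by
    apply Finset.eq_of_subset_of_card_le
    · intro s hs
      simp only [hT, Finset.mem_image, Finset.mem_insert, Finset.mem_singleton] at hs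
      obtain ⟨k, rfl | rfl | rfl | rfl, rfl⟩ := hs
      · simpa using hb1.1
      · simpa using h1
      · exact hb2.1
      · simpa [add_assoc] using h2
    · rw [h4, hT, Finset.card_image_of_injOn]
      · rw [Finset.card_insert_of_notMem, Finset.card_insert_of_notMem,
          Finset.card_insert_of_notMem, Finset.card_singleton]
        all_goals
          simp only [Finset.mem_insert, Finset.mem_singleton]
          omega
      · intro x hx y hy hxy
        have hx' : x < n := by
          simp only [Finset.coe_insert, Finset.coe_singleton, Set.mem_insert_iff,
            Set.mem_singleton_iff] at hx; omega
        have hy' : y < n := by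
          simp only [Finset.coe_insert, Finset.coe_singleton, Set.mem_insert_iff,
            Set.mem_singleton_iff] at hy; omega
        have := congrArg ZMod.val (add_left_cancel hxy)
        rwa [ZMod.val_natCast_of_lt (by omega), ZMod.val_natCast_of_lt (by omega)] at this
  refine ⟨r, by omega, by omega, ?_⟩
  intro j hj
  rw [← hTS, hT, Finset.mem_image] at hj
  obtain ⟨k, hk, hkj⟩ := hj
  rw [add_comm j, add_right_inj] at hkj
  subst hkj
  simp only [Finset.mem_insert, Finset.mem_singleton] at hk ⊢
  rcases hk with rfl | rfl | rfl | rfl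
  · simp
  · rw [hv1]; simp
  · rw [hvr]; simp
  · rw [hvr1]; simp

theorem comb (hn : 7 ≤ n) (S : Finset (ZMod n)) (h4 : 4 ≤ S.card)
    (h6 : (Finset.univ.filter fun i : ZMod n => i ∈ S ∨ i + 1 ∈ S).card ≤ 6) :
    ∃ s : ZMod n, (∀ j : ZMod n, j + s ∈ S → j.val < 5) ∨
      (∃ i : ℕ, 3 ≤ i ∧ i ≤ n - 3 ∧ ∀ j : ZMod n, j + s ∈ S →
        j.val ∈ ({0, 1, i, i + 1} : Finset ℕ)) ∨
      (∃ i : ℕ, 3 ≤ i ∧ i ≤ n - 3 ∧ ∀ j : ZMod n, j + s ∈ S →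
        j.val ∈ ({0, 1, 2, i + 1} : Finset ℕ)) := by
  classical
  have hcard := (card_add_starts S).trans h6
  obtain ⟨t, ht⟩ : ∃ t, t ∉ S := by
    by_contra! hcon
    have : S = Finset.univ := by ext x; simp [hcon x]
    rw [this, Finset.card_univ, ZMod.card] at hcard
    omega
  obtain ⟨s, hs⟩ : S.Nonempty := Finset.card_pos.1 (by omega)
  have hpos : 0 < (startsOf S).card := by
    obtain ⟨b, hb, _⟩ := exists_start S ht hs
    exact Finset.card_pos.2 ⟨b, hb⟩
  rcases (by omega : (startsOf S).card = 1 ∨ (startsOf S).card = 2) with h | h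
  · obtain ⟨b, hb⟩ := Finset.card_eq_one.1 h
    refine ⟨b, Or.inl ?_⟩
    intro j hj
    obtain ⟨b', hb', k, hk, hjk, hall⟩ := exists_start S ht hj
    rw [hb, Finset.mem_singleton] at hb'
    subst hb'
    have := run_card S hk hall
    rw [add_comm j, add_right_inj] at hjk
    rw [hjk, ZMod.val_natCast_of_lt hk]
    omega
  · obtain ⟨b₁, b₂, hne, hB⟩ := Finset.card_eq_two.1 h
    have hS4 : S.card = 4 := by omega
    by_cases h2 : b₂ + 1 ∈ S
    · by_cases h1 : b₁ + 1 ∈ S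
      · exact ⟨b₁, Or.inr (Or.inl (comb22 hn S hS4 hne hB h1 h2))⟩
      · rw [Finset.pair_comm] at hB
        exact ⟨b₂, Or.inr (Or.inr (comb31 hn S hS4 ht hne.symm hB h1))⟩
    · exact ⟨b₁, Or.inr (Or.inr (comb31 hn S hS4 ht hne hB h2))⟩

end comb

/-- in the setting of the cyclic code with generator polynomial
`g(x) = (x−δ^{−q})(x−δ^{−1})(x−1)(x−δ)(x−δ^q)`, with `n` odd and minimum Hamming
distance `4`, the code is an `(n,7)_q` MDS symbol-pair code if and only if for every
`3 ≤ i ≤ n−3`, the element `(δ^{i+1} − 1)/(δ^i − δ)` does not lie in `F_q*`. -/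
theorem stmt13 {q n : ℕ} [NeZero n] {F E : Type*} [Field F] [Fintype F] [DecidableEq F]
    [Field E] [Fintype E] [Algebra F E]
    (hq : Fintype.card F = q) (hE : Fintype.card E = q ^ 2)
    (hodd : Odd n) (hdvd : n ∣ q ^ 2 - 1) (hn : q + 1 < n)
    {δ : E} (hδ0 : δ ≠ 0) (hδF : δ ∉ Set.range (algebraMap F E)) (hδ : orderOf δ = n)
    (Code : Set (ZMod n → F))
    (hCode : Code = {c : ZMod n → F |
      ((X - C (δ⁻¹ ^ q)) * (X - C δ⁻¹) * (X - 1) * (X - C δ) * (X - C (δ ^ q))) ∣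
        (polyOf c).map (algebraMap F E)})
    (hd4 : (∀ c ∈ Code, c ≠ 0 → 4 ≤ hammingNorm c) ∧
      ∃ c ∈ Code, c ≠ 0 ∧ hammingNorm c = 4) :
    (IsMinPairDist Code 7 ∧ Nat.card Code = q ^ (n - 7 + 2)) ↔
      ∀ i : ℕ, 3 ≤ i → i ≤ n - 3 →
        ¬ ∃ τ : F, τ ≠ 0 ∧ algebraMap F E τ = (δ ^ (i + 1) - 1) / (δ ^ i - δ) := by
  classical
  have hq2 : 2 ≤ q := hq ▸ Fintype.one_lt_card
  have hn7 : 7 ≤ n := by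
    have h3 : q ≠ 2 := by
      rintro rfl
      have := Nat.le_of_dvd (by norm_num) hdvd
      omega
    have h4 : q ≠ 3 := by
      rintro rfl
      have h8 := (Nat.le_of_dvd (by norm_num) hdvd)
      norm_num at hdvd h8
      obtain ⟨k, rfl⟩ := hodd
      have h1 : k ≤ 3 := by omega
      interval_cases k <;> omega
    obtain ⟨k, rfl⟩ := hodd
    omega
  have hmem : ∀ c, c ∈ Code ↔ c ∈ LinearMap.ker (evMap n F δ) := by
    intro c
    rw [hCode, Set.mem_ofPred_eq, dvd_iff hq hodd hn hδ0 hδ, mem_ker_evMap]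
  have hCk : Code = (LinearMap.ker (evMap n F δ) : Set (ZMod n → F)) := by
    ext c; exact hmem c
  have hcard : Nat.card Code = q ^ (n - 7 + 2) := by
    have := card_ker hq hE hodd hn (by omega) hδ0 hδ
    rw [hCk]
    have he : n - 7 + 2 = n - 5 := by omega
    rw [he]
    exact this
  have hδn : δ ^ n = 1 := hδ ▸ pow_orderOf_eq_one δ
  have hδn' : δ⁻¹ ^ n = 1 := by rw [inv_pow, hδn, inv_one]
  have hpd : ∀ c : ZMod n → F, pairDist c 0 =
      (Finset.univ.filter fun i : ZMod n => c i ≠ 0 ∨ c (i + 1) ≠ 0).card := by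
    intro c
    unfold pairDist
    congr 1
    ext i
    simp only [Finset.mem_filter, Finset.mem_univ, true_and, Pi.zero_apply, ne_eq, Prod.mk.injEq]
    tauto
  have hpdsub : ∀ u v : ZMod n → F, pairDist u v = pairDist (u - v) 0 := by
    intro u v
    unfold pairDist
    congr 1
    ext i
    simp only [Finset.mem_filter, Finset.mem_univ, true_and, Pi.zero_apply, ne_eq, Prod.mk.injEq,
      Pi.sub_apply, sub_eq_zero]
  have hpdle : ∀ (c : ZMod n → F) (T : Finset ℕ), (∀ j, c j ≠ 0 → j ∈ T.image (Nat.cast : ℕ → ZMod n)) →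
      ∀ U : Finset (ZMod n), (∀ k ∈ T, (k : ZMod n) ∈ U ∧ (k : ZMod n) - 1 ∈ U) →
      pairDist c 0 ≤ U.card := by
    intro c T hT U hU
    rw [hpd]
    apply Finset.card_le_card
    intro i hi
    simp only [Finset.mem_filter, Finset.mem_univ, true_and] at hi
    rcases hi with hi | hi
    · obtain ⟨k, hk, rfl⟩ := Finset.mem_image.1 (hT _ hi)
      exact (hU k hk).1
    · obtain ⟨k, hk, hki⟩ := Finset.mem_image.1 (hT _ hi)
      have := (hU k hk).2
      rw [hki] at this
      simpa using this
  have h0mem : (0 : ZMod n → F) ∈ Code := (hmem 0).2 (Submodule.zero_mem _)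
  constructor
  · rintro ⟨⟨hmin, -⟩, -⟩ i hi hin ⟨τ, hτ0, hτ⟩
    obtain ⟨n1, n2, n3, n4⟩ := pow_sub_ne (n := n) hδ0 hδ hi hin
    rw [eq_div_iff n1, pow_succ] at hτ
    have hvi : ((i : ℕ) : ZMod n).val = i := ZMod.val_natCast_of_lt (by omega)
    have hvi1 : ((i + 1 : ℕ) : ZMod n).val = i + 1 := ZMod.val_natCast_of_lt (by omega)
    have hv1 : ((1 : ℕ) : ZMod n).val = 1 := ZMod.val_natCast_of_lt (by omega)
    have hv0 : ((0 : ℕ) : ZMod n).val = 0 := ZMod.val_natCast_of_lt (by omega)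
    let w : ℕ → F := fun k => if k = 0 then 1 else if k = 1 then -τ else if k = i then τ
      else if k = i + 1 then -1 else 0
    let c : ZMod n → F := fun j => w j.val
    have hs : ∀ j, c j ≠ 0 → j.val ∈ ({0, 1, i, i + 1} : Finset ℕ) := by
      intro j hj
      by_contra hcon
      simp only [Finset.mem_insert, Finset.mem_singleton, not_or] at hcon
      apply hj
      simp only [c, w]
      rw [if_neg hcon.1, if_neg hcon.2.1, if_neg hcon.2.2.1, if_neg hcon.2.2.2]
    have hc0 : c ((0 : ℕ) : ZMod n) = 1 := by simp only [c, hv0, w, if_true]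
    have hc1 : c ((1 : ℕ) : ZMod n) = -τ := by
      simp only [c, hv1, w]; rw [if_neg (by omega), if_pos trivial]
    have hci : c ((i : ℕ) : ZMod n) = τ := by
      simp only [c, hvi, w]; rw [if_neg (by omega), if_neg (by omega), if_pos trivial]
    have hci1 : c ((i + 1 : ℕ) : ZMod n) = -1 := by
      simp only [c, hvi1, w]
      rw [if_neg (by omega), if_neg (by omega), if_neg (by omega), if_pos trivial]
    have hT : ∀ k ∈ ({0, 1, i, i + 1} : Finset ℕ), k < n := by
      intro k hk
      simp only [Finset.mem_insert, Finset.mem_singleton] at hk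
      omega
    have hsum : ∀ f : ℕ → E, ∑ k ∈ ({0, 1, i, i + 1} : Finset ℕ), f k =
        f 0 + (f 1 + (f i + f (i + 1))) := by
      intro f
      rw [Finset.sum_insert, Finset.sum_insert, Finset.sum_insert, Finset.sum_singleton]
      all_goals
        simp only [Finset.mem_insert, Finset.mem_singleton]
        omega
    have hev : ∀ x : E, evAt x c = 1 + (- algebraMap F E τ * x + (algebraMap F E τ * x ^ i
        - x ^ i * x)) := by
      intro x
      rw [evAt_of_supp x c _ hT hs, hsum, hc0, hc1, hci, hci1]
      simp only [map_one, map_neg]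
      ring
    have hcC : c ∈ Code := by
      rw [hmem, mem_ker_evMap, hev, hev, hev]
      refine ⟨by rw [one_pow]; ring, by linear_combination hτ, ?_⟩
      have hD0 : δ ^ i ≠ 0 := pow_ne_zero _ hδ0
      rw [inv_pow]
      generalize δ ^ i = D at *
      field_simp
      linear_combination -hτ
    have hcne : c ≠ 0 := fun h => by
      rw [h] at hc0
      exact zero_ne_one hc0
    have h7 := hmin c hcC 0 h0mem hcne
    have h6 := hpdle c {0, 1, i, i + 1} (by
      intro j hj
      exact Finset.mem_image.2 ⟨j.val, hs j hj, ZMod.natCast_zmod_val j⟩)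
      {-1, 0, 1, (i : ZMod n) - 1, (i : ZMod n), (i : ZMod n) + 1} (by
      intro k hk
      simp only [Finset.mem_insert, Finset.mem_singleton] at hk
      rcases hk with rfl | rfl | rfl | rfl <;> simp)
    have h66 : ({-1, 0, 1, (i : ZMod n) - 1, (i : ZMod n), (i : ZMod n) + 1} :
        Finset (ZMod n)).card ≤ 6 := Finset.card_le_six
    omega
  · intro hcond
    have hge : ∀ c ∈ Code, c ≠ 0 → 7 ≤ pairDist c 0 := by
      intro c hc hc0
      by_contra hlt
      have h4 := hd4.1 c hc hc0
      rw [hpd] at hlt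
      obtain ⟨s, hs⟩ := comb hn7 (Finset.univ.filter fun i => c i ≠ 0) h4 (by
        simp only [Finset.mem_filter, Finset.mem_univ, true_and]
        omega)
      simp only [Finset.mem_filter, Finset.mem_univ, true_and] at hs
      have hev := (mem_ker_evMap c).1 ((hmem c).1 hc)
      have hev' : evAt (1 : E) (fun i => c (i + s)) = 0 ∧ evAt δ (fun i => c (i + s)) = 0 ∧
          evAt δ⁻¹ (fun i => c (i + s)) = 0 :=
        ⟨evAt_shift (one_pow n) c s hev.1, evAt_shift hδn c s hev.2.1,
          evAt_shift hδn' c s hev.2.2⟩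
      have hne : (fun i => c (i + s)) ≠ 0 := by
        intro h
        apply hc0
        funext j
        simpa using congrFun h (j - s)
      rcases hs with hs | ⟨i, hi, hin, hs⟩ | ⟨i, hi, hin, hs⟩
      · exact hne (eq_zero_of_five hq hodd hn hδ0 hδ _ hev' hs)
      · exact hcond i hi hin (ratio22 hδ0 hδ hi hin _ hne hev' hs)
      · exact hcond i hi hin (ratio31 hδ0 hδ hi hin _ hne hev' hs)
    refine ⟨⟨?_, ?_⟩, hcard⟩
    · intro u hu v hv huv
      rw [hpdsub]
      refine hge _ ?_ (sub_ne_zero.2 huv)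
      rw [hmem] at hu hv ⊢
      exact Submodule.sub_mem _ hu hv
    · obtain ⟨c, hc0, hc, hs⟩ := exists_six (n := n) (F := F) hq hE (by omega) δ
      have hcC := (hmem c).2 hc
      refine ⟨c, hcC, 0, h0mem, hc0, le_antisymm ?_ (hge c hcC hc0)⟩
      have := hpdle c (Finset.range 6) (by
        intro j hj
        exact Finset.mem_image.2 ⟨j.val, Finset.mem_range.2 (hs j hj), ZMod.natCast_zmod_val j⟩)
        ((Finset.range 7).image fun k : ℕ => (k : ZMod n) - 1) (by
        intro k hk
        rw [Finset.mem_range] at hk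
        refine ⟨Finset.mem_image.2 ⟨k + 1, Finset.mem_range.2 (by omega), by simp⟩,
          Finset.mem_image.2 ⟨k, Finset.mem_range.2 (by omega), rfl⟩⟩)
      refine this.trans (Finset.card_image_le.trans ?_)
      simp
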